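/- Let X be a real Banach space and let C, D ⊆ X be nonempty convex sets such that C is compact and D is simultaneously proximinal. Then C + D is simultaneously proximinal. -/

import Mathlib

/-!
`C + D` is the union of the translates `c + D`, `c ∈ C`, each of which is simultaneously proximinal.
For a bounded set `A`, the function `c ↦ d(A, c + D)` is 1-Lipschitz because
`y ↦ sup_{a ∈ A} ‖a - y‖` is, so it attains its minimum on the compact set `C` at some `c₀`.
A best simultaneous approximation to `A` from `c₀ + D` is then a best one from `C + D`.
-/

open Filter Topology Pointwise

variable {X : Type*} [NormedAddCommGroup X] [NormedSpace ℝ X]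

/-- `simSup A y = sup_{a ∈ A} ‖a - y‖`. -/
noncomputable def simSup (A : Set X) (y : X) : ℝ := ⨆ a : A, ‖(a : X) - y‖

/-- `simDist A C = inf_{y ∈ C} sup_{a ∈ A} ‖a - y‖`. -/
noncomputable def simDist (A C : Set X) : ℝ := ⨅ y : C, simSup A (y : X)

/-- The set of best simultaneous approximations `P_C(A)`. -/
def simBest (A C : Set X) : Set X := {y | y ∈ C ∧ simSup A y = simDist A C}

/-- The set `P_C(A, δ)`. -/
def simBestApprox (A C : Set X) (δ : ℝ) : Set X :=
  {y | y ∈ C ∧ simSup A y < simDist A C + δ}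

/-- `C` is simultaneously proximinal. -/
def SimProximinal (C : Set X) : Prop :=
  ∀ A : Set X, A.Nonempty → Bornology.IsBounded A → (simBest A C).Nonempty

/-- `y` is a minimizing sequence in `C` for `A`. -/
def IsMinimizing (A C : Set X) (y : ℕ → X) : Prop :=
  (∀ n, y n ∈ C) ∧ Tendsto (fun n => simSup A (y n)) atTop (𝓝 (simDist A C))

/-- Weak convergence of a sequence. -/
def WeakTendsto (y : ℕ → X) (c : X) : Prop :=
  ∀ f : X →L[ℝ] ℝ, Tendsto (fun n => f (y n)) atTop (𝓝 (f c))

/-- `C` is simultaneously approximatively compact. -/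
def SimApproxCompact (C : Set X) : Prop :=
  ∀ A : Set X, A.Nonempty → Bornology.IsBounded A → ∀ y : ℕ → X, IsMinimizing A C y →
    ∃ c ∈ C, ∃ φ : ℕ → ℕ, StrictMono φ ∧ Tendsto (y ∘ φ) atTop (𝓝 c)

/-- `C` is simultaneously approximatively weakly compact. -/
def SimApproxWeakCompact (C : Set X) : Prop :=
  ∀ A : Set X, A.Nonempty → Bornology.IsBounded A → ∀ y : ℕ → X, IsMinimizing A C y →
    ∃ c ∈ C, ∃ φ : ℕ → ℕ, StrictMono φ ∧ WeakTendsto (y ∘ φ) c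

/-- `C` is simultaneously strongly proximinal. -/
def SimStronglyProximinal (C : Set X) : Prop :=
  SimProximinal C ∧ ∀ A : Set X, A.Nonempty → Bornology.IsBounded A → ∀ ε > (0 : ℝ),
    ∃ δ > (0 : ℝ), simBestApprox A C δ ⊆ simBest A C + Metric.closedBall (0 : X) ε

/-- `C` is simultaneously weakly strongly proximinal. -/
def SimWeakStronglyProximinal (C : Set X) : Prop :=
  SimProximinal C ∧ ∀ A : Set X, A.Nonempty → Bornology.IsBounded A →
    ∀ V : Set X, V ∈ 𝓝 (0 : WeakSpace ℝ X) → ∃ δ > (0 : ℝ),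
      simBestApprox A C δ ⊆ simBest A C + V

section

variable {E : Type*} [NormedAddCommGroup E] {A C D : Set E} {y : E}

lemma simSup_nonneg (A : Set E) (y : E) : 0 ≤ simSup A y :=
  Real.iSup_nonneg fun _ => norm_nonneg _

lemma norm_sub_le_simSup (hA : Bornology.IsBounded A) {a : E} (ha : a ∈ A) (y : E) :
    ‖a - y‖ ≤ simSup A y := by
  obtain ⟨R, hR⟩ := hA.exists_norm_le
  have hbdd : BddAbove (Set.range fun a : A => ‖(a : E) - y‖) := by
    refine ⟨R + ‖y‖, Set.forall_mem_range.2 fun a => ?_⟩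
    exact norm_sub_le_of_le (hR a a.2) le_rfl
  exact le_ciSup hbdd ⟨a, ha⟩

lemma lipschitzWith_simSup (hA : Bornology.IsBounded A) : LipschitzWith 1 (simSup A) := by
  refine LipschitzWith.of_le_add fun y z => ?_
  refine Real.iSup_le (fun a => ?_) (add_nonneg (simSup_nonneg A z) dist_nonneg)
  calc ‖(a : E) - y‖ ≤ ‖(a : E) - z‖ + ‖z - y‖ := norm_sub_le_norm_sub_add_norm_sub _ _ _
    _ ≤ simSup A z + dist y z := by
      rw [dist_eq_norm']
      gcongr
      exact norm_sub_le_simSup hA a.2 z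

lemma simSup_vadd (c : E) (A : Set E) (y : E) : simSup (c +ᵥ A) y = simSup A (-c + y) := by
  have hnorm (a : E) : ‖c + a - y‖ = ‖a - (-c + y)‖ := by congr 1; abel
  calc simSup (c +ᵥ A) y = sSup ((fun a => ‖a - y‖) '' (c +ᵥ A)) :=
        (sSup_image' (f := fun a => ‖a - y‖)).symm
    _ = sSup ((fun a => ‖a - (-c + y)‖) '' A) := by
      simp only [← Set.image_vadd, Set.image_image, vadd_eq_add, hnorm]
    _ = simSup A (-c + y) := sSup_image'

lemma simDist_le_simSup (A : Set E) (hy : y ∈ C) : simDist A C ≤ simSup A y :=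
  ciInf_le (f := fun y : C => simSup A y)
    ⟨0, Set.forall_mem_range.2 fun y => simSup_nonneg A y⟩ ⟨y, hy⟩

lemma le_simDist (hC : C.Nonempty) {r : ℝ} (h : ∀ y ∈ C, r ≤ simSup A y) : r ≤ simDist A C :=
  have := hC.to_subtype
  le_ciInf fun y => h y y.2

lemma lipschitzWith_simDist_vadd (hA : Bornology.IsBounded A) (hD : D.Nonempty) :
    LipschitzWith 1 fun c : E => simDist A (c +ᵥ D) := by
  refine LipschitzWith.of_le_add fun b c => ?_
  rw [← sub_le_iff_le_add]
  refine le_simDist hD.vadd_set ?_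
  rintro _ ⟨d, hd, rfl⟩
  rw [sub_le_iff_le_add]
  calc simDist A (b +ᵥ D) ≤ simSup A (b + d) :=
        simDist_le_simSup A (Set.vadd_mem_vadd_set hd)
    _ ≤ simSup A (c + d) + dist (b + d) (c + d) := by
      simpa only [NNReal.coe_one, one_mul] using
        (lipschitzWith_simSup hA).le_add_mul (b + d) (c + d)
    _ = simSup A (c + d) + dist b c := by rw [dist_add_right]

lemma mem_simBest_iff : y ∈ simBest A C ↔ y ∈ C ∧ ∀ z ∈ C, simSup A y ≤ simSup A z :=
  and_congr_right fun hy =>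
    ⟨fun h _ hz => h.trans_le (simDist_le_simSup A hz),
      fun h => (le_simDist ⟨y, hy⟩ h).antisymm (simDist_le_simSup A hy)⟩

lemma SimProximinal.nonempty (hD : SimProximinal D) : D.Nonempty :=
  (hD {0} (Set.singleton_nonempty 0) Bornology.isBounded_singleton).mono fun _ => And.left

lemma SimProximinal.vadd (hD : SimProximinal D) (c : E) : SimProximinal (c +ᵥ D) := by
  intro A hne hA
  obtain ⟨d₀, hd₀⟩ := hD (-c +ᵥ A) hne.vadd_set (hA.vadd (-c))
  simp only [mem_simBest_iff, simSup_vadd, neg_neg] at hd₀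
  refine ⟨c + d₀, mem_simBest_iff.2 ⟨Set.vadd_mem_vadd_set hd₀.1, ?_⟩⟩
  rintro _ ⟨d, hd, rfl⟩
  exact hd₀.2 d hd

theorem compact_add_simProximinal_general (hCne : C.Nonempty) (hC : IsCompact C)
    (hD : SimProximinal D) : SimProximinal (C + D) := by
  intro A hne hA
  obtain ⟨c₀, hc₀, hmin⟩ := hC.exists_isMinOn hCne
    (lipschitzWith_simDist_vadd hA hD.nonempty).continuous.continuousOn
  obtain ⟨y₀, hy₀, hbest⟩ := hD.vadd c₀ A hne hA
  refine ⟨y₀, mem_simBest_iff.2 ⟨Set.vadd_set_subset_add hc₀ hy₀, ?_⟩⟩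
  rintro _ ⟨c, hc, d, hd, rfl⟩
  calc simSup A y₀ = simDist A (c₀ +ᵥ D) := hbest
    _ ≤ simDist A (c +ᵥ D) := hmin hc
    _ ≤ simSup A (c + d) := simDist_le_simSup A (Set.vadd_mem_vadd_set hd)

end

/-- The sum of a compact convex set and a simultaneously proximinal convex set is
simultaneously proximinal. -/
theorem compact_add_simProximinal [CompleteSpace X]
    (C D : Set X) (hCne : C.Nonempty) (hDne : D.Nonempty)
    (hCc : Convex ℝ C) (hDc : Convex ℝ D)
    (hC : IsCompact C) (hD : SimProximinal D) :
    SimProximinal (C + D) :=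
  compact_add_simProximinal_general hCne hC hD
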